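/- Let ω ⊂ ℝ² be a bounded open set and let r : ω → ℝ be bounded and Lipschitz continuous. Fix x_h ∈ ω. Then: (i) the principal value P := lim_{δ→0⁺} ∫_{ω \ B_δ(x_h)} r(y_h)(x_h − y_h)/|x_h − y_h|³ dy_h exists in ℝ², where B_δ(x_h) is the open disc of radius δ centered at x_h; and (ii) for every x₃ ∈ (0,1), lim_{ε→0⁺} ∫_{ω×(0,1)} r(y_h)(x_h − y_h)/(|x_h − y_h|² + ε²(x₃ − y₃)²)^{3/2} dy = P. -/

import Mathlib

open MeasureTheory Set Filter


/-- Local integrability of the weak singularity `‖x - y‖ ^ (-a)` for `a < 2` in the plane. -/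
lemma integrableOn_sub_rpow (ω : Set (EuclideanSpace ℝ (Fin 2))) (hωb : Bornology.IsBounded ω) (x : (EuclideanSpace ℝ (Fin 2))) (a : ℝ)
    (ha : a < 2) : IntegrableOn (fun y => ‖x - y‖ ^ (-a)) ω := by
  obtain ⟨ρ, hρ, hsub⟩ := hωb.subset_ball_lt 0 x
  have h0 : IntegrableOn (fun y : (EuclideanSpace ℝ (Fin 2)) => ‖y‖ ^ (-a)) (Metric.ball 0 ρ) := by
    rw [integrableOn_fun_norm_addHaar volume (f := fun t : ℝ => t ^ (-a))]
    have h1 : IntegrableOn (fun t : ℝ => t ^ (1 - a)) (Ioo 0 ρ) :=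
      (intervalIntegral.integrableOn_Ioo_rpow_iff hρ).2 (by linarith)
    refine h1.congr_fun (fun t ht => ?_) measurableSet_Ioo
    simp only [finrank_euclideanSpace, Fintype.card_fin, smul_eq_mul]
    rw [sub_eq_add_neg, Real.rpow_add ht.1]
    simp
  have h2 := ((Measure.measurePreserving_sub_left (volume : Measure (EuclideanSpace ℝ (Fin 2))) x).integrableOn_comp_preimage
    (Homeomorph.subLeft x).measurableEmbedding).2 h0
  refine IntegrableOn.mono_set h2 (fun y hy => ?_)
  have := hsub hy
  simpa [dist_eq_norm, norm_sub_rev] using this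

/-- An odd function integrates to zero over a symmetric set. -/
lemma setIntegral_odd {X : Type*} [MeasurableSpace X] (μ : Measure X) (φ : X → X)
    (hφ : MeasurePreserving φ μ μ) (he : MeasurableEmbedding φ) (S : Set X) (hS : φ ⁻¹' S = S)
    (f : X → (EuclideanSpace ℝ (Fin 2))) (hf : ∀ z, f (φ z) = - f z) : ∫ z in S, f z ∂μ = 0 := by
  have h := hφ.setIntegral_preimage_emb he f S
  rw [hS] at h
  simp only [hf, integral_neg] at h
  have h2 : (2 : ℝ) • ∫ z in S, f z ∂μ = 0 := by
    rw [two_smul]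
    nth_rewrite 1 [← h]
    simp
  simpa using h2

lemma kernel_bound (v : (EuclideanSpace ℝ (Fin 2))) (b : ℝ) (hb : 0 < b) :
    ‖(1 / (‖v‖ ^ 2 + b ^ 2) ^ (3 / 2 : ℝ)) • v‖ ≤ ‖v‖ ^ (-(3 / 2) : ℝ) * b ^ (-(1 / 2) : ℝ) := by
  rcases eq_or_ne v 0 with rfl | hv
  · simp
  have hv' : 0 < ‖v‖ := norm_pos_iff.2 hv
  set n := ‖v‖ with hn
  have hs : 0 < n ^ 2 + b ^ 2 := by positivity
  have e1 : n ^ (5 / 2 : ℝ) ≤ (n ^ 2 + b ^ 2) ^ (5 / 4 : ℝ) := by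
    have : n ^ (5 / 2 : ℝ) = (n ^ 2) ^ (5 / 4 : ℝ) := by
      rw [← Real.rpow_natCast, ← Real.rpow_mul hv'.le]; norm_num
    rw [this]
    gcongr
    nlinarith
  have e2 : b ^ (1 / 2 : ℝ) ≤ (n ^ 2 + b ^ 2) ^ (1 / 4 : ℝ) := by
    have : b ^ (1 / 2 : ℝ) = (b ^ 2) ^ (1 / 4 : ℝ) := by
      rw [← Real.rpow_natCast, ← Real.rpow_mul hb.le]; norm_num
    rw [this]
    gcongr
    nlinarith
  have e3 : (n ^ 2 + b ^ 2) ^ (3 / 2 : ℝ) =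
      (n ^ 2 + b ^ 2) ^ (5 / 4 : ℝ) * (n ^ 2 + b ^ 2) ^ (1 / 4 : ℝ) := by
    rw [← Real.rpow_add hs]; norm_num
  have e4 : n ^ (5 / 2 : ℝ) * b ^ (1 / 2 : ℝ) ≤ (n ^ 2 + b ^ 2) ^ (3 / 2 : ℝ) := by
    rw [e3]; gcongr
  have e5 : n ^ (-(3 / 2) : ℝ) * b ^ (-(1 / 2) : ℝ) = n / (n ^ (5 / 2 : ℝ) * b ^ (1 / 2 : ℝ)) := by
    have : n ^ (5 / 2 : ℝ) = n ^ (3 / 2 : ℝ) * n := by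
      rw [← Real.rpow_add_one hv'.ne']; norm_num
    rw [this, Real.rpow_neg hv'.le, Real.rpow_neg hb.le]
    field_simp
  rw [e5, norm_smul, ← hn, Real.norm_of_nonneg (by positivity), one_div, inv_mul_eq_div]
  gcongr

lemma kernel_bound' (v : (EuclideanSpace ℝ (Fin 2))) (b a C : ℝ) (hb : 0 ≤ b) (ha : |a| ≤ C * ‖v‖) :
    ‖(a / (‖v‖ ^ 2 + b) ^ (3 / 2 : ℝ)) • v‖ ≤ C * ‖v‖ ^ (-1 : ℝ) := by
  rcases eq_or_ne v 0 with rfl | hv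
  · simp
  have hv' : 0 < ‖v‖ := norm_pos_iff.2 hv
  set n := ‖v‖ with hn
  have hC : 0 ≤ C := by
    by_contra h
    push Not at h
    have := abs_nonneg a
    nlinarith
  have e1 : n ^ 3 ≤ (n ^ 2 + b) ^ (3 / 2 : ℝ) := by
    have : n ^ 3 = (n ^ 2) ^ (3 / 2 : ℝ) := by
      rw [← Real.rpow_natCast n 2, ← Real.rpow_mul hv'.le, ← Real.rpow_natCast n 3]; norm_num
    rw [this]
    gcongr
    linarith
  rw [norm_smul, norm_div, ← hn, Real.norm_of_nonneg (r := _ ^ _) (by positivity), Real.norm_eq_abs,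
    Real.rpow_neg_one]
  calc |a| / (n ^ 2 + b) ^ (3 / 2 : ℝ) * n ≤ (C * n) / n ^ 3 * n := by gcongr
    _ = C * n⁻¹ := by field_simp

lemma norm_cube_eq (v : (EuclideanSpace ℝ (Fin 2))) : ‖v‖ ^ 3 = (‖v‖ ^ 2 + 0) ^ (3 / 2 : ℝ) := by
  rw [add_zero, ← Real.rpow_natCast ‖v‖ 2, ← Real.rpow_mul (norm_nonneg _),
    ← Real.rpow_natCast ‖v‖ 3]
  norm_num

theorem stmt_11 (ω : Set (EuclideanSpace ℝ (Fin 2)))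
    (hωb : Bornology.IsBounded ω) (hωo : IsOpen ω)
    (r : EuclideanSpace ℝ (Fin 2) → ℝ) (L : NNReal) (hrl : LipschitzWith L r)
    (M : ℝ) (hrb : ∀ y ∈ ω, |r y| ≤ M)
    (x_h : EuclideanSpace ℝ (Fin 2)) (hx : x_h ∈ ω) :
    ∃ P : EuclideanSpace ℝ (Fin 2),
      Tendsto (fun δ : ℝ =>
          ∫ y in ω \ Metric.ball x_h δ, (r y / ‖x_h - y‖ ^ 3) • (x_h - y))
        (nhdsWithin 0 (Ioi 0)) (nhds P) ∧
      ∀ x₃ ∈ Ioo (0:ℝ) 1,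
        Tendsto (fun ε : ℝ =>
            ∫ y in ω ×ˢ Ioo (0:ℝ) 1,
              (r y.1 / (‖x_h - y.1‖ ^ 2 + ε ^ 2 * (x₃ - y.2) ^ 2) ^ (3 / 2 : ℝ)) •
                (x_h - y.1))
          (nhdsWithin 0 (Ioi 0)) (nhds P) := by
  obtain ⟨R, hR, hRω⟩ := Metric.isOpen_iff.1 hωo x_h hx
  have hM : 0 ≤ M := (abs_nonneg _).trans (hrb x_h hx)
  have hrm : Measurable r := hrl.continuous.measurable
  -- the decomposition `r = g + c`
  set c : (EuclideanSpace ℝ (Fin 2)) → ℝ := (Metric.ball x_h R).indicator (fun _ => r x_h) with hc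
  have hcm : Measurable c := measurable_const.indicator measurableSet_ball
  set g : (EuclideanSpace ℝ (Fin 2)) → ℝ := fun y => r y - c y with hg
  have hgm : Measurable g := hrm.sub hcm
  have hrgc : ∀ y, r y = g y + c y := fun y => by simp [hg]
  set C : ℝ := L + M / R with hC
  have hgb : ∀ y ∈ ω, |g y| ≤ C * ‖x_h - y‖ := by
    intro y hy
    have hMR : 0 ≤ M / R := by positivity
    by_cases hyR : y ∈ Metric.ball x_h R
    · have h1 : |g y| ≤ L * ‖x_h - y‖ := by
        have := hrl.dist_le_mul y x_h
        rw [Real.dist_eq, dist_eq_norm, norm_sub_rev] at this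
        simpa [hg, hc, indicator_of_mem hyR] using this
      have := mul_nonneg hMR (norm_nonneg (x_h - y))
      rw [hC, add_mul]; linarith
    · have h1 : |g y| ≤ M := by
        simpa [hg, hc, indicator_of_notMem hyR] using hrb y hy
      have h2 : R ≤ ‖x_h - y‖ := by
        rw [Metric.mem_ball, dist_eq_norm, norm_sub_rev] at hyR
        exact not_lt.1 hyR
      have h3 : M ≤ M / R * ‖x_h - y‖ := by
        calc M = M / R * R := by field_simp
          _ ≤ _ := by gcongr
      have := mul_nonneg L.2 (norm_nonneg (x_h - y))
      rw [hC, add_mul]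
      change 0 ≤ (L : ℝ) * ‖x_h - y‖ at this
      linarith
  have hcb : ∀ y, |c y| ≤ |r x_h| := fun y => by
    by_cases hyR : y ∈ Metric.ball x_h R
    · simp [hc, indicator_of_mem hyR]
    · simp [hc, indicator_of_notMem hyR]
  have hI1 : IntegrableOn (fun y => ‖x_h - y‖ ^ (-1 : ℝ)) ω :=
    integrableOn_sub_rpow ω hωb x_h 1 (by norm_num)
  have hI2 : IntegrableOn (fun y => ‖x_h - y‖ ^ (-(3 / 2) : ℝ)) ω :=
    integrableOn_sub_rpow ω hωb x_h (3 / 2) (by norm_num)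
  have hωm := hωo.measurableSet
  set φ : (EuclideanSpace ℝ (Fin 2)) → (EuclideanSpace ℝ (Fin 2)) := fun y => (x_h + x_h) - y with hφ
  have hφp : MeasurePreserving φ volume volume :=
    Measure.measurePreserving_sub_left (volume : Measure (EuclideanSpace ℝ (Fin 2))) (x_h + x_h)
  have hφe : MeasurableEmbedding φ := (Homeomorph.subLeft (x_h + x_h)).measurableEmbedding
  have hφx : ∀ y, x_h - φ y = -(x_h - y) := fun y => by simp only [hφ]; abel
  have hφn : ∀ y, ‖x_h - φ y‖ = ‖x_h - y‖ := fun y => by rw [hφx, norm_neg]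
  have hφb : ∀ y ρ, φ y ∈ Metric.ball x_h ρ ↔ y ∈ Metric.ball x_h ρ := fun y ρ => by
    rw [Metric.mem_ball', Metric.mem_ball', dist_eq_norm, dist_eq_norm, hφn]
  refine ⟨∫ y in ω, (g y / ‖x_h - y‖ ^ 3) • (x_h - y), ?_, ?_⟩
  · have hGi : IntegrableOn (fun y => (g y / ‖x_h - y‖ ^ 3) • (x_h - y)) ω := by
      refine (hI1.const_mul C).mono' (by fun_prop) ?_
      filter_upwards [ae_restrict_mem hωm] with y hy
      rw [norm_cube_eq]
      exact kernel_bound' _ 0 _ _ le_rfl (hgb y hy)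
    have key : ∀ δ : ℝ, 0 < δ →
        ∫ y in ω \ Metric.ball x_h δ, (r y / ‖x_h - y‖ ^ 3) • (x_h - y) =
        ∫ y in ω, ((Metric.ball x_h δ)ᶜ).indicator
          (fun y => (g y / ‖x_h - y‖ ^ 3) • (x_h - y)) y := by
      intro δ hδ
      have hCi : IntegrableOn (fun y => (c y / ‖x_h - y‖ ^ 3) • (x_h - y))
          (ω \ Metric.ball x_h δ) := by
        refine ((hI1.mono_set sdiff_subset).const_mul (|r x_h| / δ)).mono' (by fun_prop) ?_
        filter_upwards [ae_restrict_mem (hωm.diff measurableSet_ball)] with y hy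
        rw [norm_cube_eq]
        refine kernel_bound' _ 0 _ _ le_rfl ((hcb y).trans ?_)
        have h2 : δ ≤ ‖x_h - y‖ := by
          have := hy.2
          rw [Metric.mem_ball, dist_eq_norm, norm_sub_rev] at this
          exact not_lt.1 this
        calc |r x_h| = |r x_h| / δ * δ := by field_simp
          _ ≤ _ := by gcongr
      have h0 : ∫ y in ω \ Metric.ball x_h δ, (c y / ‖x_h - y‖ ^ 3) • (x_h - y) = 0 := by
        have e1 : (fun y => (c y / ‖x_h - y‖ ^ 3) • (x_h - y)) =
            (Metric.ball x_h R).indicator (fun y => (r x_h / ‖x_h - y‖ ^ 3) • (x_h - y)) := by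
          funext y
          by_cases hyR : y ∈ Metric.ball x_h R
          · simp only [hc, indicator_of_mem hyR]
          · simp only [hc, indicator_of_notMem hyR]; simp
        rw [e1, setIntegral_indicator measurableSet_ball]
        refine setIntegral_odd volume φ hφp hφe _ ?_ _ ?_
        · ext y
          simp only [mem_preimage, mem_inter_iff, Set.mem_sdiff, hφb]
          constructor
          · rintro ⟨⟨_, h2⟩, h3⟩; exact ⟨⟨hRω h3, h2⟩, h3⟩
          · rintro ⟨⟨_, h2⟩, h3⟩; exact ⟨⟨hRω ((hφb _ _).2 h3), h2⟩, h3⟩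
        · intro y
          rw [hφn, hφx, smul_neg]
      rw [setIntegral_indicator measurableSet_ball.compl, ← Set.sdiff_eq]
      simp_rw [hrgc, add_div, add_smul]
      rw [integral_add (hGi.mono_set sdiff_subset) hCi, h0, add_zero]
    have hlim : Tendsto (fun δ : ℝ => ∫ y in ω, ((Metric.ball x_h δ)ᶜ).indicator
          (fun y => (g y / ‖x_h - y‖ ^ 3) • (x_h - y)) y) (nhdsWithin 0 (Ioi 0))
          (nhds (∫ y in ω, (g y / ‖x_h - y‖ ^ 3) • (x_h - y))) := by
      refine tendsto_integral_filter_of_dominated_convergence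
        (fun y => ‖(g y / ‖x_h - y‖ ^ 3) • (x_h - y)‖) ?_ ?_ hGi.norm ?_
      · exact Eventually.of_forall fun δ =>
          hGi.aestronglyMeasurable.indicator measurableSet_ball.compl
      · exact Eventually.of_forall fun δ => Eventually.of_forall fun y =>
          norm_indicator_le_norm_self _ _
      · refine Eventually.of_forall fun y => ?_
        rcases eq_or_ne y x_h with rfl | hy
        · simp [indicator]
        · refine tendsto_const_nhds.congr' ?_
          have : 0 < dist y x_h := dist_pos.2 hy
          filter_upwards [nhdsWithin_le_nhds (Iio_mem_nhds this)] with δ hδ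
          rw [indicator_of_mem]
          simpa using hδ.le
    refine hlim.congr' ?_
    filter_upwards [self_mem_nhdsWithin] with δ hδ
    exact (key δ hδ).symm
  · intro x₃ hx₃
    set ν : Measure ((EuclideanSpace ℝ (Fin 2)) × ℝ) := volume.restrict (ω ×ˢ Ioo (0:ℝ) 1) with hν
    have hνp : ν = (volume.restrict ω).prod (volume.restrict (Ioo (0:ℝ) 1)) := by
      rw [hν, Measure.volume_eq_prod, Measure.prod_restrict]
    have hmem : ∀ᵐ z ∂ν, z ∈ ω ×ˢ Ioo (0:ℝ) 1 := ae_restrict_mem (hωm.prod measurableSet_Ioo)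
    have hJ1 : Integrable (fun z : (EuclideanSpace ℝ (Fin 2)) × ℝ => ‖x_h - z.1‖ ^ (-1 : ℝ)) ν := by
      rw [hνp]; exact Integrable.comp_fst hI1 _
    have hGi : ∀ ε : ℝ, Integrable (fun y : (EuclideanSpace ℝ (Fin 2)) × ℝ =>
        (g y.1 / (‖x_h - y.1‖ ^ 2 + ε ^ 2 * (x₃ - y.2) ^ 2) ^ (3 / 2 : ℝ)) • (x_h - y.1)) ν := by
      intro ε
      refine (hJ1.const_mul C).mono' (by fun_prop) ?_
      filter_upwards [hmem] with y hy
      exact kernel_bound' _ _ _ _ (by positivity) (hgb y.1 hy.1)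
    have key : ∀ ε : ℝ, 0 < ε → ∫ y, (r y.1 / (‖x_h - y.1‖ ^ 2 + ε ^ 2 * (x₃ - y.2) ^ 2) ^
          (3 / 2 : ℝ)) • (x_h - y.1) ∂ν =
        ∫ y, (g y.1 / (‖x_h - y.1‖ ^ 2 + ε ^ 2 * (x₃ - y.2) ^ 2) ^ (3 / 2 : ℝ)) •
          (x_h - y.1) ∂ν := by
      intro ε hε
      have hCi : Integrable (fun y : (EuclideanSpace ℝ (Fin 2)) × ℝ =>
          (c y.1 / (‖x_h - y.1‖ ^ 2 + ε ^ 2 * (x₃ - y.2) ^ 2) ^ (3 / 2 : ℝ)) •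
            (x_h - y.1)) ν := by
        have hs : IntegrableOn (fun t : ℝ => (ε * |x₃ - t|) ^ (-(1 / 2) : ℝ)) (Ioo 0 1) := by
          have h1 : IntervalIntegrable (fun t : ℝ => |t| ^ (-(1 / 2) : ℝ)) volume
              (x₃ - 0) (x₃ - 1) := by
            have hpos : ∀ a : ℝ, 0 ≤ a → IntervalIntegrable
                (fun t : ℝ => |t| ^ (-(1 / 2) : ℝ)) volume 0 a := by
              intro a ha
              have := intervalIntegral.intervalIntegrable_rpow' (a := 0) (b := a)
                (r := -(1 / 2)) (by norm_num)
              refine this.congr (fun t ht => ?_)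
              rw [uIoc_of_le ha] at ht
              simp only [abs_of_pos ht.1]
            have hneg : IntervalIntegrable
                (fun t : ℝ => |t| ^ (-(1 / 2) : ℝ)) volume 0 (x₃ - 1) := by
              have := (hpos (1 - x₃) (by linarith [hx₃.2])).comp_sub_left 0
              simpa using this
            have h2 := hpos x₃ hx₃.1.le
            rw [sub_zero]
            exact h2.symm.trans hneg
          have h2 := h1.comp_sub_left x₃
          simp only [sub_sub_cancel] at h2
          rw [intervalIntegrable_iff_integrableOn_Ioo_of_le zero_le_one] at h2
          refine IntegrableOn.congr_fun (h2.const_mul (ε ^ (-(1 / 2) : ℝ))) (fun t _ => ?_)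
            measurableSet_Ioo
          rw [Real.mul_rpow hε.le (abs_nonneg _)]
        have hb : Integrable (fun z : (EuclideanSpace ℝ (Fin 2)) × ℝ => |r x_h| *
            (‖x_h - z.1‖ ^ (-(3 / 2) : ℝ) * (ε * |x₃ - z.2|) ^ (-(1 / 2) : ℝ))) ν := by
          rw [hνp]
          exact (Integrable.mul_prod hI2 hs).const_mul _
        have hne : ∀ᵐ z ∂ν, z.2 ≠ x₃ := by
          rw [hνp]
          refine Measure.quasiMeasurePreserving_snd.ae (p := fun t : ℝ => t ≠ x₃) ?_
          exact ae_restrict_of_ae (Measure.ae_ne volume x₃)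
        refine hb.mono' (by fun_prop) ?_
        filter_upwards [hne] with z hz
        have hpos : 0 < ε * |x₃ - z.2| := mul_pos hε (abs_pos.2 (sub_ne_zero.2 hz.symm))
        have h1 := kernel_bound (x_h - z.1) _ hpos
        rw [mul_pow, sq_abs] at h1
        rw [← mul_one_div, mul_smul, norm_smul, Real.norm_eq_abs]
        exact mul_le_mul (hcb _) h1 (norm_nonneg _) (abs_nonneg _)
      have h0 : ∫ y, (c y.1 / (‖x_h - y.1‖ ^ 2 + ε ^ 2 * (x₃ - y.2) ^ 2) ^ (3 / 2 : ℝ)) •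
            (x_h - y.1) ∂ν = 0 := by
        have e1 : (fun y : (EuclideanSpace ℝ (Fin 2)) × ℝ =>
            (c y.1 / (‖x_h - y.1‖ ^ 2 + ε ^ 2 * (x₃ - y.2) ^ 2) ^ (3 / 2 : ℝ)) •
              (x_h - y.1)) =
            (Metric.ball x_h R ×ˢ univ).indicator (fun y : (EuclideanSpace ℝ (Fin 2)) × ℝ =>
            (r x_h / (‖x_h - y.1‖ ^ 2 + ε ^ 2 * (x₃ - y.2) ^ 2) ^ (3 / 2 : ℝ)) •
              (x_h - y.1)) := by
          funext y
          by_cases hyR : y.1 ∈ Metric.ball x_h R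
          · have : y ∈ Metric.ball x_h R ×ˢ (univ : Set ℝ) := ⟨hyR, mem_univ _⟩
            simp only [hc, indicator_of_mem hyR, indicator_of_mem this]
          · have : y ∉ Metric.ball x_h R ×ˢ (univ : Set ℝ) := fun h => hyR h.1
            simp only [hc, indicator_of_notMem hyR, indicator_of_notMem this]; simp
        rw [e1, hν, setIntegral_indicator (measurableSet_ball.prod MeasurableSet.univ)]
        refine setIntegral_odd volume (Prod.map φ id) ?_ ?_ _ ?_ _ ?_
        · exact hφp.prod (MeasurePreserving.id _)
        · exact hφe.prodMap MeasurableEmbedding.id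
        · ext y
          simp only [mem_preimage, mem_inter_iff, mem_prod, Prod.map_fst, Prod.map_snd, id, hφb,
            mem_univ, and_true]
          constructor
          · rintro ⟨⟨_, h2⟩, h3⟩; exact ⟨⟨hRω h3, h2⟩, h3⟩
          · rintro ⟨⟨_, h2⟩, h3⟩; exact ⟨⟨hRω ((hφb _ _).2 h3), h2⟩, h3⟩
        · intro y
          simp only [Prod.map_fst, Prod.map_snd, id]
          rw [hφn, hφx, smul_neg]
      simp_rw [hrgc, add_div, add_smul]
      rw [integral_add (hGi ε) hCi, h0, add_zero]
    have hP : ∫ y in ω, (g y / ‖x_h - y‖ ^ 3) • (x_h - y) =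
        ∫ z, (g z.1 / ‖x_h - z.1‖ ^ 3) • (x_h - z.1) ∂ν := by
      rw [hνp, integral_fun_fst (fun y => (g y / ‖x_h - y‖ ^ 3) • (x_h - y))]
      simp
    have hlim : Tendsto (fun ε : ℝ => ∫ y, (g y.1 / (‖x_h - y.1‖ ^ 2 + ε ^ 2 * (x₃ - y.2) ^ 2) ^
          (3 / 2 : ℝ)) • (x_h - y.1) ∂ν) (nhdsWithin 0 (Ioi 0))
          (nhds (∫ z, (g z.1 / ‖x_h - z.1‖ ^ 3) • (x_h - z.1) ∂ν)) := by
      refine tendsto_integral_filter_of_dominated_convergence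
        (fun z => C * ‖x_h - z.1‖ ^ (-1 : ℝ)) ?_ ?_ (hJ1.const_mul C) ?_
      · exact Eventually.of_forall fun ε => (hGi ε).aestronglyMeasurable
      · refine Eventually.of_forall fun ε => ?_
        filter_upwards [hmem] with y hy
        exact kernel_bound' _ _ _ _ (by positivity) (hgb y.1 hy.1)
      · refine Eventually.of_forall fun y => ?_
        rcases eq_or_ne (x_h - y.1) 0 with hy | hy
        · simp [hy]
        · have hn : 0 < ‖x_h - y.1‖ := norm_pos_iff.2 hy
          refine tendsto_nhdsWithin_of_tendsto_nhds ?_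
          rw [norm_cube_eq]
          have hcont : ContinuousAt (fun ε : ℝ =>
              (g y.1 / (‖x_h - y.1‖ ^ 2 + ε ^ 2 * (x₃ - y.2) ^ 2) ^ (3 / 2 : ℝ)) •
                (x_h - y.1)) 0 := by
            have hb : ContinuousAt (fun ε : ℝ =>
                (‖x_h - y.1‖ ^ 2 + ε ^ 2 * (x₃ - y.2) ^ 2) ^ (3 / 2 : ℝ)) 0 := by
              refine ContinuousAt.rpow_const (by fun_prop) (Or.inr (by norm_num))
            refine ContinuousAt.smul (continuousAt_const.div hb ?_) continuousAt_const
            positivity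
          have := hcont.tendsto
          simpa using this
    rw [hP]
    refine hlim.congr' ?_
    filter_upwards [self_mem_nhdsWithin] with ε hε
    exact (key ε hε).symm
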